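/- arXiv:1806.07883 — 2 statements merged into one kernel-verified Lean document; each statement's English description precedes it below -/
import Mathlib

section
/- For every integer n ≥ 2, the variance in the momentum domain of the Abel-Poisson wavelet has the asymptotic expansion C(ρ)/A(ρ) = (n² + 3n + 2)/(4ρ²) + (n² - 1)/(2nρ) + O(1) as ρ → 0+; that is, the function ρ ↦ C(ρ)/A(ρ) - (n² + 3n + 2)/(4ρ²) - (n² - 1)/(2nρ) is bounded on some interval (0, δ) with δ > 0. -/
/-- `S n m ρ = Σ_{l=1}^∞ C(l+n-2, l) · l^m · e^{-2ρl}`. -/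
noncomputable def S (n : ℕ) (m : ℤ) (ρ : ℝ) : ℝ :=
  ∑' l : ℕ, (Nat.choose (l + 1 + n - 2) (l + 1) : ℝ) * ((l : ℝ) + 1) ^ m *
    Real.exp (-2 * ρ * ((l : ℝ) + 1))

/-- `A(ρ) = (2/(n-1)) S_{n,2}(ρ) + S_{n,1}(ρ)`. -/
noncomputable def A (n : ℕ) (ρ : ℝ) : ℝ :=
  2 / ((n : ℝ) - 1) * S n 2 ρ + S n 1 ρ

/-- `C(ρ) = (2/(n-1)) S_{n,4}(ρ) + 3 S_{n,3}(ρ) + (n-1) S_{n,2}(ρ)`. -/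
noncomputable def Cf (n : ℕ) (ρ : ℝ) : ℝ :=
  2 / ((n : ℝ) - 1) * S n 4 ρ + 3 * S n 3 ρ + ((n : ℝ) - 1) * S n 2 ρ

/-- Closed forms of the sums, as polynomials in `u = 1/(1-x)`. -/
noncomputable def Gp (u : ℝ) : ℕ → ℕ → ℝ
  | k, 0 => u ^ (k + 1)
  | k, m + 1 => ((k : ℝ) + 1) * (Gp u (k + 1) m - Gp u k m)

lemma hasSum_Gp (x : ℝ) (hx0 : 0 < x) (hx1 : x < 1) (m : ℕ) : ∀ k : ℕ,
    HasSum (fun l : ℕ => ((l + k).choose k : ℝ) * (l : ℝ) ^ m * x ^ l)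
      (Gp (1 / (1 - x)) k m) := by
  induction m with
  | zero =>
    intro k
    have h := hasSum_choose_mul_geometric_of_norm_lt_one (𝕜 := ℝ) k (r := x)
      (by rw [Real.norm_eq_abs, abs_of_pos hx0]; exact hx1)
    simpa [Gp] using h
  | succ m ih =>
    intro k
    have h := ((ih (k + 1)).sub (ih k)).mul_left ((k : ℝ) + 1)
    simp only [Gp]
    refine h.congr_fun ?_ |> fun h => h
    intro l
    have e : ((k : ℝ) + 1) * ((l + (k + 1)).choose (k + 1) : ℝ)
        = ((l : ℝ) + k + 1) * ((l + k).choose k : ℝ) := by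
      have := Nat.add_one_mul_choose_eq (l + k) k
      have h2 : (((l + k + 1) * (l + k).choose k : ℕ) : ℝ)
        = (((l + k + 1).choose (k + 1) * (k + 1) : ℕ) : ℝ) := by exact_mod_cast this
      push_cast at h2
      rw [← add_assoc]
      linarith
    rw [pow_succ]
    linear_combination (-(l : ℝ) ^ m * x ^ l) * e

lemma S_eq (k m : ℕ) (ρ : ℝ) (hρ : 0 < ρ) :
    S (k + 2) ((m + 1 : ℕ) : ℤ) ρ = Gp (1 / (1 - Real.exp (-(2 * ρ)))) k (m + 1) := by
  have h := hasSum_Gp (Real.exp (-(2 * ρ))) (Real.exp_pos _)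
    (by rw [Real.exp_lt_one_iff]; linarith) (m + 1) k
  rw [← hasSum_nat_add_iff' 1] at h
  simp only [Finset.sum_range_one, Nat.cast_zero, zero_pow (Nat.succ_ne_zero m), mul_zero,
    zero_mul, sub_zero] at h
  rw [← h.tsum_eq]
  unfold S
  congr 1
  ext l
  have e1 : l + 1 + (k + 2) - 2 = l + 1 + k := by omega
  have e2 : (l + 1 + k).choose (l + 1) = (l + 1 + k).choose k := by
    rw [Nat.choose_symm_add]
  rw [e1, e2, zpow_natCast, ← Real.exp_nat_mul]
  push_cast
  congr 2
  ring

lemma u_bound (t : ℝ) (ht : 0 < t) (ht1 : t ≤ 1) :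
    |1 / (1 - Real.exp (-t)) - 1 / t - 1 / 2| ≤ 4 * t := by
  have h := Real.exp_bound (x := -t) (by rw [abs_neg, abs_of_pos ht]; exact ht1)
    (n := 3) (by norm_num)
  rw [abs_neg, abs_of_pos ht] at h
  simp only [Finset.sum_range_succ, Finset.sum_range_zero, Nat.factorial] at h
  norm_num at h
  set v := 1 - Real.exp (-t) with hv
  have hE : Real.exp (-t) = 1 - v := by rw [hv]; ring
  rw [hE] at h
  obtain ⟨h1, h2⟩ := abs_le.1 h
  have ht2 : t ^ 2 ≤ t := by nlinarith
  have ht3 : t ^ 3 ≤ t := by nlinarith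
  have hvt : t / 4 ≤ v := by nlinarith
  have hv0 : 0 < v := by linarith
  have e : 1 / v - 1 / t - 1 / 2 = (2 * t - 2 * v - t * v) / (2 * t * v) := by
    field_simp
  have ht4 : t ^ 4 ≤ t ^ 3 := by
    nlinarith [pow_pos ht 3]
  have h1' := mul_le_mul_of_nonneg_left h1 ht.le
  have h2' := mul_le_mul_of_nonneg_left h2 ht.le
  rw [e, abs_div, abs_of_pos (by positivity : 0 < 2 * t * v), div_le_iff₀ (by positivity)]
  have h3 : 2 * t ^ 3 ≤ 4 * t * (2 * t * v) := by
    nlinarith [mul_le_mul_of_nonneg_left hvt (by positivity : 0 ≤ 8 * t ^ 2)]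
  refine le_trans ?_ h3
  rw [abs_le]
  constructor <;> nlinarith [pow_pos ht 3]

lemma quot_eq (k : ℕ) (u : ℝ) (hu : 1 < u) (N : ℝ) (hN : N = (k : ℝ) + 1) :
    (2 / N * Gp u k 4 + 3 * Gp u k 3 + N * Gp u k 2) / (2 / N * Gp u k 2 + Gp u k 1)
      = (N + 2) * (N + 3) * u ^ 2 + (-((N + 2) * (N ^ 2 + 3 * N + 3) / (N + 1))) * u
        + (N + 2) / (N + 1) * (u / (2 * (N + 1) * u - N)) := by
  have hk : (0 : ℝ) ≤ k := Nat.cast_nonneg k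
  have hN0 : 0 < N := by linarith
  have hq : 0 < 2 * (N + 1) * u - N := by nlinarith
  have hu1 : 0 < u - 1 := by linarith
  have hu0 : 0 < u := by linarith
  have hA : 2 / N * Gp u k 2 + Gp u k 1
      = u ^ (k + 1) * ((u - 1) * (2 * (N + 1) * u - N)) := by
    simp only [Gp]
    push_cast
    rw [show (k : ℝ) = N - 1 by linarith]
    field_simp
    ring
  have hC : 2 / N * Gp u k 4 + 3 * Gp u k 3 + N * Gp u k 2
      = u ^ (k + 1) * ((u - 1) * ((N + 1) * (N + 2) * u
        * (2 * (N + 3) * u ^ 2 - 3 * (N + 2) * u + (N + 1)))) := by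
    simp only [Gp]
    push_cast
    rw [show (k : ℝ) = N - 1 by linarith]
    field_simp
    ring
  rw [hA, hC, mul_div_mul_left _ _ (by positivity), mul_div_mul_left _ _ hu1.ne']
  have hN1 : N + 1 ≠ 0 := by positivity
  have hq' := hq.ne'
  rw [div_eq_iff hq']
  have h1 : u / (2 * (N + 1) * u - N) * (2 * (N + 1) * u - N) = u := div_mul_cancel₀ _ hq'
  have h2 : (N + 2) / (N + 1) * (u / (2 * (N + 1) * u - N)) * (2 * (N + 1) * u - N)
      = (N + 2) / (N + 1) * u := by rw [mul_assoc, h1]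
  rw [add_mul _ ((N + 2) / (N + 1) * (u / (2 * (N + 1) * u - N))), h2]
  field_simp
  ring

/-- `C(ρ)/A(ρ) = (n²+3n+2)/(4ρ²) + (n²-1)/(2nρ) + O(1)` as `ρ → 0+`. -/
theorem stmt_13 (n : ℕ) (hn : 2 ≤ n) :
    ∃ δ > (0 : ℝ), ∃ M : ℝ, ∀ ρ : ℝ, 0 < ρ → ρ < δ →
      |Cf n ρ / A n ρ - ((n : ℝ) ^ 2 + 3 * (n : ℝ) + 2) / (4 * ρ ^ 2) -
        ((n : ℝ) ^ 2 - 1) / (2 * (n : ℝ) * ρ)| ≤ M := by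
  obtain ⟨k, rfl⟩ := Nat.exists_eq_add_of_le' hn
  obtain ⟨N, hN⟩ : ∃ N : ℝ, N = (k : ℝ) + 1 := ⟨_, rfl⟩
  have hk : (0 : ℝ) ≤ k := Nat.cast_nonneg k
  have hN0 : 0 < N := by linarith
  have hnN : ((k + 2 : ℕ) : ℝ) = N + 1 := by push_cast; linarith
  obtain ⟨b, hb⟩ : ∃ b : ℝ, b = -((N + 2) * (N ^ 2 + 3 * N + 3) / (N + 1)) := ⟨_, rfl⟩
  refine ⟨1 / 2, by norm_num, (N + 2) * (N + 3) * 29 + |b| * 5 + (N + 2) / (N + 1), ?_⟩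
  intro ρ hρ hρ1
  obtain ⟨u, hu⟩ : ∃ u : ℝ, u = 1 / (1 - Real.exp (-(2 * ρ))) := ⟨_, rfl⟩
  have hx0 := Real.exp_pos (-(2 * ρ))
  have hx1 : Real.exp (-(2 * ρ)) < 1 := by rw [Real.exp_lt_one_iff]; linarith
  have hu1 : 1 < u := by
    rw [hu, lt_div_iff₀ (by linarith)]; linarith
  have hS1 : S (k + 2) 1 ρ = Gp u k 1 := by rw [hu]; exact S_eq k 0 ρ hρ
  have hS2 : S (k + 2) 2 ρ = Gp u k 2 := by rw [hu]; exact S_eq k 1 ρ hρ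
  have hS3 : S (k + 2) 3 ρ = Gp u k 3 := by rw [hu]; exact S_eq k 2 ρ hρ
  have hS4 : S (k + 2) 4 ρ = Gp u k 4 := by rw [hu]; exact S_eq k 3 ρ hρ
  have hw := u_bound (2 * ρ) (by linarith) (by linarith)
  rw [← hu] at hw
  obtain ⟨w, hwd⟩ : ∃ w : ℝ, w = u - 1 / (2 * ρ) - 1 / 2 := ⟨_, rfl⟩
  rw [← hwd] at hw
  have hus : u = 1 / (2 * ρ) + 1 / 2 + w := by rw [hwd]; ring
  have hw4 : |w| ≤ 4 := by linarith
  have hwρ : |w / ρ| ≤ 8 := by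
    rw [abs_div, abs_of_pos hρ, div_le_iff₀ hρ]; linarith
  unfold Cf A
  rw [hS1, hS2, hS3, hS4, hnN, show N + 1 - 1 = N by ring, quot_eq k u hu1 N hN, ← hb]
  have hq : 0 < 2 * (N + 1) * u - N := by nlinarith
  have key : (N + 2) * (N + 3) * u ^ 2 + b * u
        + (N + 2) / (N + 1) * (u / (2 * (N + 1) * u - N))
      - ((N + 1) ^ 2 + 3 * (N + 1) + 2) / (4 * ρ ^ 2) - ((N + 1) ^ 2 - 1) / (2 * (N + 1) * ρ)
      = (N + 2) * (N + 3) * (1 / 4 + w ^ 2 + w + w / ρ) + b * (1 / 2 + w)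
        + (N + 2) / (N + 1) * (u / (2 * (N + 1) * u - N)) := by
    have : (N + 2) * (N + 3) * u ^ 2 + b * u
      - ((N + 1) ^ 2 + 3 * (N + 1) + 2) / (4 * ρ ^ 2) - ((N + 1) ^ 2 - 1) / (2 * (N + 1) * ρ)
      = (N + 2) * (N + 3) * (1 / 4 + w ^ 2 + w + w / ρ) + b * (1 / 2 + w) := by
      rw [hus, hb]
      field_simp
      ring
    linarith
  rw [key]
  have b1 : |1 / 4 + w ^ 2 + w + w / ρ| ≤ 29 := by
    obtain ⟨p1, p2⟩ := abs_le.1 hw4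
    obtain ⟨p3, p4⟩ := abs_le.1 hwρ
    rw [abs_le]
    constructor <;> nlinarith
  have b2 : |1 / 2 + w| ≤ 5 := by
    obtain ⟨p1, p2⟩ := abs_le.1 hw4
    rw [abs_le]
    constructor <;> linarith
  have b3 : |u / (2 * (N + 1) * u - N)| ≤ 1 := by
    rw [abs_of_pos (div_pos (by linarith) hq), div_le_one hq]
    nlinarith
  refine (abs_add_three _ _ _).trans ?_
  rw [abs_mul, abs_mul b, abs_mul ((N + 2) / (N + 1)),
    abs_of_pos (by positivity : 0 < (N + 2) * (N + 3)),
    abs_of_pos (by positivity : 0 < (N + 2) / (N + 1))]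
  have c1 := mul_le_mul_of_nonneg_left b1 (by positivity : 0 ≤ (N + 2) * (N + 3))
  have c2 := mul_le_mul_of_nonneg_left b2 (abs_nonneg b)
  have c3 := mul_le_mul_of_nonneg_left b3 (by positivity : 0 ≤ (N + 2) / (N + 1))
  linarith
end

section
/- For every integer n ≥ 2, the variance in the space domain of the Abel-Poisson wavelet satisfies lim_{ρ→0+} (e^{2ρ} A(ρ)² / B(ρ)² - 1) / ρ² = (n² - 3n + 3) / (n(n-1)). -/
open Filter

/-- `B(ρ) = Σ_{l=1}^∞ (2(l+n-1)/(n-1)) C(l+n-2,l) √(l(l+1)) e^{-2ρl}`. -/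
noncomputable def B (n : ℕ) (ρ : ℝ) : ℝ :=
  ∑' l : ℕ, 2 * (((l : ℝ) + 1) + (n : ℝ) - 1) / ((n : ℝ) - 1) *
    (Nat.choose (l + 1 + n - 2) (l + 1) : ℝ) *
    Real.sqrt (((l : ℝ) + 1) * ((l : ℝ) + 2)) * Real.exp (-2 * ρ * ((l : ℝ) + 1))

lemma exp_lt_one_aux {t : ℝ} (h : t < 0) : Real.exp t < 1 := by
  have := Real.exp_lt_exp.2 h
  rwa [Real.exp_zero] at this

lemma hs_choose (k : ℕ) {x : ℝ} (h0 : 0 < x) (h1 : x < 1) :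
    HasSum (fun l : ℕ => ((l + k).choose k : ℝ) * x ^ l) (1 / (1 - x) ^ (k + 1)) := by
  have hx : ‖x‖ < 1 := by rw [Real.norm_eq_abs, abs_of_pos h0]; exact h1
  rw [← tsum_choose_mul_geometric_of_norm_lt_one k hx]
  exact (summable_choose_mul_geometric_of_norm_lt_one k hx).hasSum

lemma choose_step (l k : ℕ) :
    ((l : ℝ) + k + 1) * ((l + k).choose k : ℝ) =
      ((k : ℝ) + 1) * ((l + (k + 1)).choose (k + 1) : ℝ) := by
  have h := Nat.add_one_mul_choose_eq (l + k) k
  have h' : (((l + k + 1) * (l + k).choose k : ℕ) : ℝ) =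
    (((l + k + 1).choose (k + 1) * (k + 1) : ℕ) : ℝ) := by exact_mod_cast h
  push_cast at h'
  rw [h', mul_comm, add_assoc]

lemma abel (k : ℕ) (u : ℕ → ℝ) (L : ℝ) (hu : Tendsto u atTop (nhds L)) :
    Tendsto (fun x : ℝ => (1 - x) ^ (k + 1) * ∑' l : ℕ, ((l + k).choose k : ℝ) * u l * x ^ l)
      (nhdsWithin 1 (Set.Ioo 0 1)) (nhds L) := by
  obtain ⟨M, hM⟩ : ∃ M, ∀ l, |u l - L| ≤ M := by
    have := (hu.sub_const L).abs.bddAbove_range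
    obtain ⟨M, hM⟩ := this
    exact ⟨M, fun l => hM ⟨l, rfl⟩⟩
  rw [Metric.tendsto_nhds]
  intro ε hε
  have h1 := (Metric.tendsto_atTop.1 hu) (ε / 2) (by positivity)
  obtain ⟨N, hN⟩ := h1
  have hM0 : 0 ≤ M := (abs_nonneg _).trans (hM 0)
  set C : ℝ := ∑ l ∈ Finset.range N, ((l + k).choose k : ℝ) * M with hC
  have hlim : Tendsto (fun x : ℝ => (1 - x) ^ (k + 1) * C) (nhdsWithin 1 (Set.Ioo 0 1))
      (nhds 0) := by
    have : Continuous (fun x : ℝ => (1 - x) ^ (k + 1) * C) := by fun_prop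
    have h := this.tendsto 1
    simp only [sub_self, ne_eq, Nat.add_eq_zero_iff, one_ne_zero, and_false, not_false_eq_true,
      zero_pow, zero_mul] at h
    exact h.mono_left nhdsWithin_le_nhds
  have hev := hlim.eventually (gt_mem_nhds (show (0 : ℝ) < ε / 2 by positivity))
  filter_upwards [hev, self_mem_nhdsWithin] with x hx hx01
  obtain ⟨hx0, hx1⟩ := hx01
  have hS := hs_choose k hx0 hx1
  have hd : ∀ l : ℕ, (0 : ℝ) ≤ ((l + k).choose k : ℝ) * x ^ l := fun l => by positivity
  have hsum : Summable (fun l : ℕ => ((l + k).choose k : ℝ) * x ^ l * (u l - L)) := by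
    refine Summable.of_norm_bounded (hS.summable.mul_right M) fun l => ?_
    rw [norm_mul, Real.norm_of_nonneg (hd l)]
    exact mul_le_mul_of_nonneg_left (hM l) (hd l)
  have hpos : 0 < (1 - x) ^ (k + 1) := pow_pos (by linarith) _
  have heq : (1 - x) ^ (k + 1) * ∑' l : ℕ, ((l + k).choose k : ℝ) * u l * x ^ l - L =
      (1 - x) ^ (k + 1) * ∑' l : ℕ, ((l + k).choose k : ℝ) * x ^ l * (u l - L) := by
    have h2 := (hsum.hasSum.add (hS.mul_right L)).tsum_eq
    have h3 : (∑' l : ℕ, ((l + k).choose k : ℝ) * u l * x ^ l) =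
      ∑' l : ℕ, (((l + k).choose k : ℝ) * x ^ l * (u l - L) +
        ((l + k).choose k : ℝ) * x ^ l * L) := tsum_congr fun l => by ring
    rw [h3, h2]
    field_simp
    ring
  rw [Real.dist_eq, heq, abs_mul, abs_of_pos hpos]
  let g : ℕ → ℝ := fun l => if l ∈ Finset.range N then ((l + k).choose k : ℝ) * M else 0
  have hg : HasSum g C := by
    have h := hasSum_sum_of_ne_finset_zero (L := SummationFilter.unconditional ℕ) (f := g) (s := Finset.range N)
      (fun b hb => by simp only [g, if_neg hb])
    have h' : ∑ b ∈ Finset.range N, g b = C :=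
      Finset.sum_congr rfl fun b hb => by simp only [g, if_pos hb]
    rwa [h'] at h
  have hb := hg.add (hS.mul_right (ε / 2))
  have hle : |∑' l : ℕ, ((l + k).choose k : ℝ) * x ^ l * (u l - L)| ≤
      C + 1 / (1 - x) ^ (k + 1) * (ε / 2) := by
    rw [← Real.norm_eq_abs]
    refine tsum_of_norm_bounded hb fun l => ?_
    rw [norm_mul, Real.norm_of_nonneg (hd l), Real.norm_eq_abs]
    by_cases hl : l ∈ Finset.range N
    · simp only [g, if_pos hl]
      have h5 : ((l + k).choose k : ℝ) * x ^ l * |u l - L| ≤ ((l + k).choose k : ℝ) * M := by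
        have : x ^ l ≤ 1 := pow_le_one₀ hx0.le hx1.le
        have h6 : ((l + k).choose k : ℝ) * x ^ l ≤ ((l + k).choose k : ℝ) :=
          mul_le_of_le_one_right (by positivity) this
        exact mul_le_mul h6 (hM l) (abs_nonneg _) (by positivity)
      have := mul_nonneg (hd l) (by positivity : 0 ≤ ε / 2)
      linarith
    · simp only [g, if_neg hl, zero_add]
      refine mul_le_mul_of_nonneg_left ?_ (hd l)
      have := hN l (by simpa using hl)
      rw [Real.dist_eq] at this
      exact this.le
  calc _ ≤ (1 - x) ^ (k + 1) * (C + 1 / (1 - x) ^ (k + 1) * (ε / 2)) :=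
        mul_le_mul_of_nonneg_left hle hpos.le
    _ = (1 - x) ^ (k + 1) * C + ε / 2 := by field_simp
    _ < ε := by linarith

/-- The correction sequence. -/
noncomputable def useq (k l : ℕ) : ℝ :=
  ((l : ℝ) + k + 1) / (2 * l + 1 + 2 * Real.sqrt (l * (l + 1)))

lemma useq_lim (k : ℕ) : Tendsto (useq k) atTop (nhds (1 / 4)) := by
  have hi : Tendsto (fun l : ℕ => (1 : ℝ) / (l : ℝ)) atTop (nhds 0) :=
    tendsto_one_div_atTop_nhds_zero_nat
  have h1 : Tendsto (fun l : ℕ => (1 + ((k : ℝ) + 1) * (1 / (l : ℝ))) /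
      (2 + 1 / (l : ℝ) + 2 * Real.sqrt (1 + 1 / (l : ℝ)))) atTop
      (nhds ((1 + ((k : ℝ) + 1) * 0) / (2 + 0 + 2 * Real.sqrt (1 + 0)))) := by
    refine Tendsto.div ((hi.const_mul _).const_add 1)
      ((hi.const_add 2).add (((hi.const_add 1).sqrt).const_mul 2)) (by norm_num)
  have h2 : (1 + ((k : ℝ) + 1) * 0) / (2 + 0 + 2 * Real.sqrt (1 + 0)) = 1 / 4 := by norm_num
  rw [h2] at h1
  refine h1.congr' ?_
  filter_upwards [eventually_gt_atTop 0] with l hl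
  have hl' : (0 : ℝ) < l := by exact_mod_cast hl
  have hs : Real.sqrt ((l : ℝ) * (l + 1)) = l * Real.sqrt (1 + 1 / (l : ℝ)) := by
    have : (l : ℝ) * (l + 1) = (l : ℝ) ^ 2 * (1 + 1 / l) := by field_simp
    rw [this, Real.sqrt_mul (by positivity), Real.sqrt_sq hl'.le]
  rw [useq, hs]
  have := Real.sqrt_nonneg (1 + 1 / (l : ℝ))
  generalize Real.sqrt (1 + 1 / (l : ℝ)) = r at *
  rw [div_eq_div_iff (by positivity) (by positivity)]
  field_simp
  ring

lemma useq_bdd (k : ℕ) : ∃ M, ∀ l, |useq k l| ≤ M := by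
  obtain ⟨M, hM⟩ := (useq_lim k).abs.bddAbove_range
  exact ⟨M, fun l => hM ⟨l, rfl⟩⟩

lemma shift {f : ℕ → ℝ} {s : ℝ} (h : HasSum f s) (h0 : f 0 = 0) :
    HasSum (fun l => f (l + 1)) s := by
  have := (hasSum_nat_add_iff' (f := f) (g := s) 1).2 h
  simpa [h0] using this

lemma exp_pow (ρ : ℝ) (l : ℕ) :
    Real.exp (-2 * ρ * ((l : ℝ) + 1)) = Real.exp (-2 * ρ) ^ (l + 1) := by
  rw [← Real.exp_nat_mul]; push_cast; ring_nf

lemma ch_eq (l k : ℕ) : (l + 1 + (k + 2) - 2).choose (l + 1) = (l + 1 + k).choose k := by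
  have : l + 1 + (k + 2) - 2 = l + 1 + k := by omega
  rw [this, Nat.choose_symm_add]

lemma S_one (k : ℕ) {ρ : ℝ} (hρ : 0 < ρ) {y : ℝ} (hy : y = 1 - Real.exp (-2 * ρ)) :
    S (k + 2) 1 ρ = ((k : ℝ) + 1) * (1 / y ^ (k + 2)) - ((k : ℝ) + 1) * (1 / y ^ (k + 1)) := by
  have hx0 := Real.exp_pos (-2 * ρ)
  have hx1 : Real.exp (-2 * ρ) < 1 := exp_lt_one_aux (by linarith)
  have h := ((hs_choose (k + 1) hx0 hx1).mul_left ((k : ℝ) + 1)).sub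
    ((hs_choose k hx0 hx1).mul_left ((k : ℝ) + 1))
  rw [← hy] at h
  have h' := (shift h (by simp)).tsum_eq
  rw [← h', S]
  refine tsum_congr fun l => ?_
  have c1 := choose_step (l + 1) k
  rw [exp_pow, ch_eq, zpow_one]
  push_cast at c1
  rw [← mul_assoc, ← c1]
  ring

lemma S_two (k : ℕ) {ρ : ℝ} (hρ : 0 < ρ) {y : ℝ} (hy : y = 1 - Real.exp (-2 * ρ)) :
    S (k + 2) 2 ρ = ((k : ℝ) + 1) * (k + 2) * (1 / y ^ (k + 3))
      - (2 * (k : ℝ) + 3) * (k + 1) * (1 / y ^ (k + 2)) + ((k : ℝ) + 1) ^ 2 * (1 / y ^ (k + 1)) := by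
  have hx0 := Real.exp_pos (-2 * ρ)
  have hx1 : Real.exp (-2 * ρ) < 1 := exp_lt_one_aux (by linarith)
  have h := (((hs_choose (k + 2) hx0 hx1).mul_left (((k : ℝ) + 1) * (k + 2))).sub
    ((hs_choose (k + 1) hx0 hx1).mul_left ((2 * (k : ℝ) + 3) * (k + 1)))).add
    ((hs_choose k hx0 hx1).mul_left (((k : ℝ) + 1) ^ 2))
  rw [← hy] at h
  have h' := (shift h (by simp; ring)).tsum_eq
  rw [← h', S]
  refine tsum_congr fun l => ?_
  have c1 := choose_step (l + 1) k
  have c2 := choose_step (l + 1) (k + 1)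
  rw [exp_pow, ch_eq, zpow_ofNat]
  push_cast at c1 c2
  simp only [show k + 1 + 1 = k + 2 from rfl] at c2
  linear_combination (Real.exp (-2 * ρ) ^ (l + 1)) *
    (((l : ℝ) + 1 + k + 2 - (2 * k + 3)) * c1 + ((k : ℝ) + 1) * c2)

lemma A_eq (k : ℕ) {ρ : ℝ} (hρ : 0 < ρ) {y : ℝ} (hy : y = 1 - Real.exp (-2 * ρ)) (hy0 : 0 < y) :
    y ^ (k + 3) * A (k + 2) ρ = 2 * (k + 2) - (3 * k + 5) * y + (k + 1) * y ^ 2 := by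
  rw [A, S_one k hρ hy, S_two k hρ hy]
  push_cast
  have h1 : (k : ℝ) + 2 - 1 = k + 1 := by ring
  have h2 : (k : ℝ) + 1 ≠ 0 := by positivity
  rw [h1]
  field_simp
  ring

lemma B_eq (k : ℕ) {ρ : ℝ} (hρ : 0 < ρ) {y : ℝ} (hy : y = 1 - Real.exp (-2 * ρ)) (hy0 : 0 < y) :
    y ^ (k + 3) * B (k + 2) ρ = 2 * (k + 2) - (2 * k + 3) * y - y ^ 2 / (k + 1) *
      (y ^ (k + 1) * ∑' l : ℕ, ((l + k).choose k : ℝ) * useq k l * Real.exp (-2 * ρ) ^ l) := by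
  have hx0 := Real.exp_pos (-2 * ρ)
  have hx1 : Real.exp (-2 * ρ) < 1 := exp_lt_one_aux (by linarith)
  have h2 : (k : ℝ) + 1 ≠ 0 := by positivity
  have hsum : Summable (fun l : ℕ => ((l + k).choose k : ℝ) * useq k l * Real.exp (-2 * ρ) ^ l) := by
    obtain ⟨M, hM⟩ := useq_bdd k
    refine Summable.of_norm_bounded ((hs_choose k hx0 hx1).summable.mul_right M) fun l => ?_
    have hd : (0 : ℝ) ≤ ((l + k).choose k : ℝ) * Real.exp (-2 * ρ) ^ l := by positivity
    rw [mul_right_comm, norm_mul, Real.norm_of_nonneg hd]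
    exact mul_le_mul_of_nonneg_left (hM l) hd
  have h := (((hs_choose (k + 2) hx0 hx1).mul_left (2 * ((k : ℝ) + 2))).sub
    ((hs_choose (k + 1) hx0 hx1).mul_left (2 * (k : ℝ) + 3))).sub
    (hsum.hasSum.mul_left (1 / ((k : ℝ) + 1)))
  rw [← hy] at h
  have h0 : useq k 0 = k + 1 := by simp [useq]
  have h' := (shift h (by simp [h0]; field_simp; ring)).tsum_eq
  have hB : B (k + 2) ρ = 2 * ((k : ℝ) + 2) * (1 / y ^ (k + 2 + 1)) -
      (2 * (k : ℝ) + 3) * (1 / y ^ (k + 1 + 1)) - 1 / ((k : ℝ) + 1) *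
      ∑' l : ℕ, ((l + k).choose k : ℝ) * useq k l * Real.exp (-2 * ρ) ^ l := by
    rw [← h', B]
    refine tsum_congr fun l => ?_
    have c1 := choose_step (l + 1) k
    have c2 := choose_step (l + 1) (k + 1)
    rw [exp_pow, ch_eq, useq]
    push_cast at c1 c2 ⊢
    simp only [show k + 1 + 1 = k + 2 from rfl] at c2
    have e1 : ((l : ℝ) + 1) * (l + 1 + 1) = (l + 1) * (l + 2) := by ring
    rw [e1, show (k : ℝ) + 2 - 1 = k + 1 by ring]
    have hs := Real.sq_sqrt (show (0 : ℝ) ≤ ((l : ℝ) + 1) * (l + 2) by positivity)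
    have hs0 := Real.sqrt_nonneg (((l : ℝ) + 1) * (l + 2))
    generalize Real.sqrt (((l : ℝ) + 1) * (l + 2)) = r at *
    have hr : ((l : ℝ) + 1 + k + 1) / (2 * (l + 1) + 1 + 2 * r) =
        (l + 1 + k + 1) * (2 * (l + 1) + 1 - 2 * r) := by
      rw [div_eq_iff (by positivity)]
      linear_combination (4 * ((l : ℝ) + 1 + k + 1)) * hs
    rw [hr]
    field_simp
    linear_combination (2 * (l : ℝ) + 3) * c1 + ((k : ℝ) + 1) * 2 * c2
  rw [hB]
  field_simp
  ring

/-- `lim_{ρ→0+} (e^{2ρ} A(ρ)²/B(ρ)² - 1)/ρ² = (n²-3n+3)/(n(n-1))`. -/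
theorem stmt_14 (n : ℕ) (hn : 2 ≤ n) :
    Tendsto (fun ρ : ℝ => (Real.exp (2 * ρ) * (A n ρ) ^ 2 / (B n ρ) ^ 2 - 1) / ρ ^ 2)
      (nhdsWithin 0 (Set.Ioi 0))
      (nhds (((n : ℝ) ^ 2 - 3 * (n : ℝ) + 3) / ((n : ℝ) * ((n : ℝ) - 1)))) := by
  obtain ⟨k, rfl⟩ : ∃ k, n = k + 2 := ⟨n - 2, by omega⟩
  have hk : (k : ℝ) + 1 ≠ 0 := by positivity
  set V : ℝ → ℝ := fun ρ => (1 - Real.exp (-2 * ρ)) ^ (k + 1) *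
    ∑' l : ℕ, ((l + k).choose k : ℝ) * useq k l * Real.exp (-2 * ρ) ^ l with hV
  have hVlim : Tendsto V (nhdsWithin 0 (Set.Ioi 0)) (nhds (1 / 4)) := by
    refine (abel k (useq k) (1 / 4) (useq_lim k)).comp (f := fun ρ : ℝ => Real.exp (-2 * ρ)) ?_
    refine tendsto_nhdsWithin_iff.2 ⟨?_, ?_⟩
    · have : Continuous (fun ρ : ℝ => Real.exp (-2 * ρ)) := by fun_prop
      have h := this.tendsto 0
      simp only [mul_zero, Real.exp_zero] at h
      exact h.mono_left nhdsWithin_le_nhds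
    · filter_upwards [self_mem_nhdsWithin] with ρ hρ
      have hρ' : 0 < ρ := hρ
      exact ⟨Real.exp_pos _, exp_lt_one_aux (by linarith)⟩
  have ha : Tendsto (fun ρ : ℝ => Real.exp ρ) (nhdsWithin 0 (Set.Ioi 0)) (nhds 1) := by
    have h := Real.continuous_exp.tendsto 0
    rw [Real.exp_zero] at h
    exact h.mono_left nhdsWithin_le_nhds
  have hz : Tendsto (fun ρ : ℝ => (Real.exp ρ - 1) / ρ) (nhdsWithin 0 (Set.Ioi 0)) (nhds 1) := by
    have h := (hasDerivAt_iff_tendsto_slope.1 (Real.hasDerivAt_exp 0)).mono_left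
      (nhdsWithin_mono 0 (fun x (hx : x ∈ Set.Ioi (0 : ℝ)) => (ne_of_gt hx : x ≠ 0)))
    rw [Real.exp_zero] at h
    refine h.congr fun ρ => ?_
    simp [slope_def_field]
  have hy : Tendsto (fun ρ : ℝ => 1 - 1 / Real.exp ρ ^ 2) (nhdsWithin 0 (Set.Ioi 0)) (nhds 0) := by
    have h := (tendsto_const_nhds (x := (1 : ℝ))).sub
      ((tendsto_const_nhds (x := (1 : ℝ))).div (ha.pow 2) (by norm_num))
    simpa using h
  set Y : ℝ → ℝ := fun ρ => 1 - 1 / Real.exp ρ ^ 2 with hY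
  set F : ℝ → ℝ := fun ρ => 2 * (k + 2) - (3 * k + 5) * Y ρ + (k + 1) * Y ρ ^ 2 with hF
  set G : ℝ → ℝ := fun ρ => 2 * (k + 2) - (2 * k + 3) * Y ρ - Y ρ ^ 2 / (k + 1) * V ρ with hG
  have hFl : Tendsto F (nhdsWithin 0 (Set.Ioi 0)) (nhds (2 * (k + 2))) := by
    have h := ((hy.const_mul (3 * (k : ℝ) + 5)).const_sub (2 * ((k : ℝ) + 2))).add
      ((hy.pow 2).const_mul ((k : ℝ) + 1))
    simpa using h
  have hGl : Tendsto G (nhdsWithin 0 (Set.Ioi 0)) (nhds (2 * (k + 2))) := by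
    have h := ((hy.const_mul (2 * (k : ℝ) + 3)).const_sub (2 * ((k : ℝ) + 2))).sub
      (((hy.pow 2).div_const ((k : ℝ) + 1)).mul hVlim)
    simpa using h
  have hmain : Tendsto (fun ρ : ℝ => ((Real.exp ρ - 1) / ρ) ^ 2 *
      ((k + 1 - Real.exp ρ) / Real.exp ρ ^ 3 +
        (Real.exp ρ + 1) ^ 2 / Real.exp ρ ^ 4 * (V ρ / (k + 1))) *
      ((Real.exp ρ * F ρ + G ρ) / G ρ ^ 2)) (nhdsWithin 0 (Set.Ioi 0))
      (nhds ((1 : ℝ) ^ 2 * (((k : ℝ) + 1 - 1) / 1 ^ 3 + (1 + 1) ^ 2 / 1 ^ 4 * ((1 / 4) / (k + 1))) *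
        ((1 * (2 * (k + 2)) + 2 * (k + 2)) / (2 * (k + 2)) ^ 2))) := by
    refine ((hz.pow 2).mul (((ha.const_sub _).div (ha.pow 3) (by norm_num)).add
      ((((ha.add_const 1).pow 2).div (ha.pow 4) (by norm_num)).mul (hVlim.div_const _)))).mul
      (((ha.mul hFl).add hGl).div (hGl.pow 2) (by positivity))
  have hval : ((((k + 2 : ℕ) : ℝ) ^ 2 - 3 * ((k + 2 : ℕ) : ℝ) + 3) /
      (((k + 2 : ℕ) : ℝ) * (((k + 2 : ℕ) : ℝ) - 1))) =
      ((1 : ℝ) ^ 2 * (((k : ℝ) + 1 - 1) / 1 ^ 3 + (1 + 1) ^ 2 / 1 ^ 4 * ((1 / 4) / (k + 1))) *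
        ((1 * (2 * (k + 2)) + 2 * (k + 2)) / (2 * (k + 2)) ^ 2)) := by
    push_cast
    rw [show (k : ℝ) + 2 - 1 = k + 1 by ring]
    field_simp
    ring
  rw [hval]
  refine hmain.congr' ?_
  have hGne : ∀ᶠ ρ in nhdsWithin (0 : ℝ) (Set.Ioi 0), G ρ ≠ 0 :=
    hGl.eventually_ne (by positivity)
  filter_upwards [hGne, self_mem_nhdsWithin] with ρ hG0 hρ
  have hρ' : 0 < ρ := hρ
  have hx1 : Real.exp (-2 * ρ) < 1 := exp_lt_one_aux (by linarith)
  have hYeq : Y ρ = 1 - Real.exp (-2 * ρ) := by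
    simp only [hY]
    rw [← Real.exp_nat_mul, one_div, ← Real.exp_neg]
    push_cast
    ring_nf
  have hY0 : 0 < Y ρ := by rw [hYeq]; linarith
  have hA := A_eq k hρ' hYeq hY0
  have hB := B_eq k hρ' hYeq hY0
  have hA' : Y ρ ^ (k + 3) * A (k + 2) ρ = F ρ := hA
  have hB' : Y ρ ^ (k + 3) * B (k + 2) ρ = G ρ := by
    rw [hB]; simp only [hG, hV]; rw [← hYeq]
  have hratio : A (k + 2) ρ ^ 2 / B (k + 2) ρ ^ 2 = F ρ ^ 2 / G ρ ^ 2 := by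
    rw [← hA', ← hB', mul_pow, mul_pow, mul_div_mul_left _ _ (by positivity)]
  have he2 : Real.exp (2 * ρ) = Real.exp ρ ^ 2 := by
    rw [← Real.exp_nat_mul]; norm_num
  rw [mul_div_assoc (Real.exp (2 * ρ)), hratio, he2]
  have ha0 : Real.exp ρ ≠ 0 := (Real.exp_pos ρ).ne'
  have key : Real.exp ρ * F ρ - G ρ = (Real.exp ρ - 1) ^ 2 *
      ((k + 1 - Real.exp ρ) / Real.exp ρ ^ 3 +
        (Real.exp ρ + 1) ^ 2 / Real.exp ρ ^ 4 * (V ρ / (k + 1))) := by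
    simp only [hF, hG, hY]
    generalize V ρ = v
    generalize Real.exp ρ = a at *
    field_simp
    ring
  rw [div_pow, div_mul_eq_mul_div, ← key]
  field_simp
  ring
end
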